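/- (Estimating equations for the pseudo minimum phi-divergence estimator.) Let φ : (0,∞) → ℝ be differentiable and assume all counts ŷ_{his} are strictly positive. Then for every 1 ≤ l ≤ k and 1 ≤ r ≤ d, ∂/∂β_{lr} d_φ(p̂, π(β)) = −(1/τ) Σ_{h=1}^H Σ_{i=1}^{n_h} w_{hi} m_{hi} x_{hil} Σ_{s=1}^{d+1} f_φ(ŷ_{his}/m_{hi}, π_{his}(β)) (δ_{rs} π_{hir}(β) − π_{hir}(β) π_{his}(β)), where δ_{rs} = 1 if r = s and 0 otherwise. Hence the pseudo minimum phi-divergence estimator solves u_φ(β) = 0 with u_φ(β) = Σ_h Σ_i (w_{hi} m_{hi}/φ''(1)) Δ(π*_{hi}(β)) f*_{φ,hi}(ŷ_{hi}/m_{hi}, β) ⊗ x_{hi}. -/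

import Mathlib

/-- Multinomial logistic probabilities for a cluster with covariate vector `x`. -/
noncomputable def mlogit {k d : ℕ} (x : Fin k → ℝ) (β : Fin d → Fin k → ℝ) :
    Fin (d + 1) → ℝ := fun r =>
  if h : (r : ℕ) < d then
    Real.exp (∑ l, x l * β ⟨(r : ℕ), h⟩ l) / (1 + ∑ s, Real.exp (∑ l, x l * β s l))
  else
    1 / (1 + ∑ s, Real.exp (∑ l, x l * β s l))

/-- `f_φ(x, π) = (x/π) φ'(x/π) − φ(x/π)`. -/
noncomputable def fdiv (φ : ℝ → ℝ) (x p : ℝ) : ℝ :=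
  x / p * deriv φ (x / p) - φ (x / p)

theorem mlogit_castSucc {k d : ℕ} (x : Fin k → ℝ) (β : Fin d → Fin k → ℝ) (r : Fin d) :
    mlogit x β r.castSucc =
      Real.exp (∑ l, x l * β r l) / (1 + ∑ s, Real.exp (∑ l, x l * β s l)) := by
  simp [mlogit]

theorem mlogit_last {k d : ℕ} (x : Fin k → ℝ) (β : Fin d → Fin k → ℝ) :
    mlogit x β (Fin.last d) = 1 / (1 + ∑ s, Real.exp (∑ l, x l * β s l)) := by
  simp [mlogit]

theorem mlogit_pos {k d : ℕ} (x : Fin k → ℝ) (β : Fin d → Fin k → ℝ) (s : Fin (d + 1)) :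
    0 < mlogit x β s := by
  unfold mlogit
  split_ifs <;> positivity

theorem hasDerivAt_linearPredictor {k d : ℕ} (x : Fin k → ℝ) (β : Fin d → Fin k → ℝ)
    (l : Fin k) (r s : Fin d) :
    HasDerivAt
      (fun t : ℝ => ∑ j, x j * Function.update β r (Function.update (β r) l t) s j)
      (if r = s then x l else 0) (β r l) := by
  by_cases hrs : r = s
  · subst hrs
    have h : HasDerivAt (fun t : ℝ => ∑ j, x j * Function.update (β r) l t j)
        (∑ j, x j * (Pi.single l (1 : ℝ) : Fin k → ℝ) j) (β r l) :=
      HasDerivAt.fun_sum fun j _ =>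
        (hasDerivAt_pi.1 (hasDerivAt_update (β r) l (β r l)) j).const_mul (x j)
    simpa [Pi.single_apply] using h
  · simpa [Function.update_of_ne (Ne.symm hrs), hrs] using
      hasDerivAt_const (β r l) (∑ j, x j * β s j)

theorem hasDerivAt_mlogit {k d : ℕ} (x : Fin k → ℝ) (β : Fin d → Fin k → ℝ)
    (l : Fin k) (r : Fin d) (s : Fin (d + 1)) :
    HasDerivAt
      (fun t : ℝ => mlogit x (Function.update β r (Function.update (β r) l t)) s)
      (x l * ((if Fin.castSucc r = s then mlogit x β (Fin.castSucc r) else 0)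
        - mlogit x β (Fin.castSucc r) * mlogit x β s))
      (β r l) := by
  have hexp (q : Fin d) : HasDerivAt
      (fun t : ℝ =>
        Real.exp (∑ j, x j * Function.update β r (Function.update (β r) l t) q j))
      (Real.exp (∑ j, x j * β q j) * (if r = q then x l else 0)) (β r l) := by
    simpa using (hasDerivAt_linearPredictor x β l r q).exp
  have hden : HasDerivAt
      (fun t : ℝ => 1 + ∑ q,
        Real.exp (∑ j, x j * Function.update β r (Function.update (β r) l t) q j))
      (Real.exp (∑ j, x j * β r j) * x l) (β r l) := by
    have h := (HasDerivAt.fun_sum (u := Finset.univ) fun q _ => hexp q).const_add 1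
    simpa using h
  have hne : 1 + ∑ q, Real.exp (∑ j, x j * β q j) ≠ 0 := by positivity
  have hne' : 1 + ∑ q, Real.exp (∑ j, x j *
      Function.update β r (Function.update (β r) l (β r l)) q j) ≠ 0 := by positivity
  induction s using Fin.lastCases with
  | last =>
    simp only [mlogit_last, mlogit_castSucc, (Fin.castSucc_lt_last r).ne, if_false]
    refine ((hasDerivAt_const (β r l) (1 : ℝ)).fun_div hden hne').congr_deriv ?_
    simp only [Function.update_eq_self]
    field_simp
    ring
  | cast q =>
    simp only [mlogit_castSucc, Fin.castSucc_inj]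
    refine ((hexp q).fun_div hden hne').congr_deriv ?_
    simp only [Function.update_eq_self]
    split_ifs with hrq
    · subst hrq
      field_simp
    · field_simp
      ring

theorem hasDerivAt_mul_comp_div {φ : ℝ → ℝ} {c p : ℝ} (hp : p ≠ 0)
    (hφ : DifferentiableAt ℝ φ (c / p)) :
    HasDerivAt (fun q => q * φ (c / q)) (-fdiv φ c p) p := by
  have hdiv : HasDerivAt (fun q => c / q) (-c / p ^ 2) p := by
    simpa using (hasDerivAt_const p c).fun_div (hasDerivAt_id' p) hp
  have h := (hasDerivAt_id' p).fun_mul (hφ.hasDerivAt.comp p hdiv)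
  refine h.congr_deriv ?_
  simp only [fdiv, Function.comp_apply]
  field_simp
  ring

/-- Estimating equations for the pseudo minimum phi-divergence estimator.
For differentiable `φ` and strictly positive counts,
`∂/∂β_{lr} d_φ(p̂, π(β)) = −(1/τ) ∑_h ∑_i w_{hi} m_{hi} x_{hil}
  ∑_{s=1}^{d+1} f_φ(ŷ_{his}/m_{hi}, π_{his}(β)) (δ_{rs} π_{hir}(β) − π_{hir}(β) π_{his}(β))`,
and hence the pseudo minimum phi-divergence estimator (a minimizer of
`d_φ(p̂, π(·))`) solves the system `u_φ(β) = 0` given by the vanishing of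
these weighted sums. -/
theorem stmt8 {k d H : ℕ} (n : Fin H → ℕ)
    (y : (h : Fin H) → Fin (n h) → Fin (d + 1) → ℝ)
    (x : (h : Fin H) → Fin (n h) → Fin k → ℝ)
    (w : (h : Fin H) → Fin (n h) → ℝ)
    (hw : ∀ h i, 0 < w h i) (hy : ∀ h i s, 0 < y h i s)
    (φ : ℝ → ℝ) (hφ : ∀ t > (0 : ℝ), DifferentiableAt ℝ φ t) :
    let m : (h : Fin H) → Fin (n h) → ℝ := fun h i => ∑ s, y h i s
    let τ : ℝ := ∑ h, ∑ i, w h i * m h i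
    let dφ : (Fin d → Fin k → ℝ) → ℝ := fun β =>
      (1 / τ) * ∑ h, ∑ i, w h i * m h i *
        ∑ s, mlogit (x h i) β s * φ (y h i s / (m h i * mlogit (x h i) β s))
    (∀ (β : Fin d → Fin k → ℝ) (l : Fin k) (r : Fin d),
      HasDerivAt
        (fun t : ℝ => dφ (Function.update β r (Function.update (β r) l t)))
        (-(1 / τ) * ∑ h, ∑ i, w h i * m h i * x h i l *
          ∑ s, fdiv φ (y h i s / m h i) (mlogit (x h i) β s) *
            ((if Fin.castSucc r = s then mlogit (x h i) β (Fin.castSucc r) else 0)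
              - mlogit (x h i) β (Fin.castSucc r) * mlogit (x h i) β s))
        (β r l)) ∧
    (∀ β₀ : Fin d → Fin k → ℝ, (∀ β, dφ β₀ ≤ dφ β) →
      ∀ (l : Fin k) (r : Fin d),
        ∑ h, ∑ i, w h i * m h i * x h i l *
          ∑ s, fdiv φ (y h i s / m h i) (mlogit (x h i) β₀ s) *
            ((if Fin.castSucc r = s then mlogit (x h i) β₀ (Fin.castSucc r) else 0)
              - mlogit (x h i) β₀ (Fin.castSucc r) * mlogit (x h i) β₀ s) = 0) := by
  intro m τ dφ
  have hm (h : Fin H) (i : Fin (n h)) : 0 < m h i :=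
    Finset.sum_pos (fun s _ => hy h i s) Finset.univ_nonempty
  have hderiv : ∀ (β : Fin d → Fin k → ℝ) (l : Fin k) (r : Fin d),
      HasDerivAt
        (fun t : ℝ => dφ (Function.update β r (Function.update (β r) l t)))
        (-(1 / τ) * ∑ h, ∑ i, w h i * m h i * x h i l *
          ∑ s, fdiv φ (y h i s / m h i) (mlogit (x h i) β s) *
            ((if Fin.castSucc r = s then mlogit (x h i) β (Fin.castSucc r) else 0)
              - mlogit (x h i) β (Fin.castSucc r) * mlogit (x h i) β s))
        (β r l) := by
    intro β l r
    have hterm (h : Fin H) (i : Fin (n h)) (s : Fin (d + 1)) :=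
      (hasDerivAt_mul_comp_div (mlogit_pos (x h i) β s).ne'
        (hφ _ (div_pos (div_pos (hy h i s) (hm h i)) (mlogit_pos (x h i) β s)))).comp_of_eq
        (β r l) (hasDerivAt_mlogit (x h i) β l r s) (by simp only [Function.update_eq_self])
    have hsum := (HasDerivAt.fun_sum (u := Finset.univ) fun h _ =>
      HasDerivAt.fun_sum (u := Finset.univ) fun i _ =>
        (HasDerivAt.fun_sum (u := Finset.univ) fun s _ => hterm h i s).const_mul
          (w h i * m h i)).const_mul (1 / τ)
    simp only [Function.comp_def, div_div] at hsum
    refine hsum.congr_deriv ?_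
    rw [neg_mul, ← mul_neg]
    simp only [← Finset.sum_neg_distrib, Finset.mul_sum]
    refine Finset.sum_congr rfl fun h _ => Finset.sum_congr rfl fun i _ =>
      Finset.sum_congr rfl fun s _ => ?_
    ring
  refine ⟨hderiv, fun β₀ hmin l r => ?_⟩
  have hloc : IsLocalMin
      (fun t : ℝ => dφ (Function.update β₀ r (Function.update (β₀ r) l t))) (β₀ r l) :=
    Filter.Eventually.of_forall fun t => by
      simpa only [Function.update_eq_self] using hmin _
  have hzero := hloc.hasDerivAt_eq_zero (hderiv β₀ l r)
  rcases mul_eq_zero.1 hzero with hτ | hsum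
  · have hτ0 : τ = 0 := by simpa using hτ
    have hpos (h : Fin H) (i : Fin (n h)) : 0 < w h i * m h i := mul_pos (hw h i) (hm h i)
    have hstrata := (Finset.sum_eq_zero_iff_of_nonneg fun h _ =>
      Finset.sum_nonneg fun i _ => (hpos h i).le).1 hτ0
    refine Finset.sum_eq_zero fun h hh => Finset.sum_eq_zero fun i hi => ?_
    exact absurd ((Finset.sum_eq_zero_iff_of_nonneg fun i _ => (hpos h i).le).1
      (hstrata h hh) i hi) (hpos h i).ne'
  · exact hsum
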